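/- arXiv:2312.15607 — 6 statements merged into one kernel-verified Lean document; each statement's English description precedes it below -/
import Mathlib

section
/- For every s ∈ (0,1) and every real λ ≥ 0, the function t ↦ (e^{−tλ} − 1) t^{−1−s} is integrable on (0,∞) and (1/Γ(−s)) ∫₀^∞ (e^{−tλ} − 1) t^{−1−s} dt = λ^s, where Γ(−s) is defined as −Γ(1−s)/s with Γ the Gamma function. -/
open MeasureTheory Real Set

/-- **Spectral representation of fractional powers.**
For every `s ∈ (0,1)` and every real `λ ≥ 0`, the function
`t ↦ (e^{−tλ} − 1) t^{−1−s}` is integrable on `(0,∞)` and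
`(1/Γ(−s)) ∫₀^∞ (e^{−tλ} − 1) t^{−1−s} dt = λ^s`,
where `Γ(−s) := −Γ(1−s)/s`. -/
theorem spectral_representation_fractional_power
    (s lam : ℝ) (hs : s ∈ Set.Ioo (0 : ℝ) 1) (hlam : 0 ≤ lam) :
    IntegrableOn (fun t : ℝ => (Real.exp (-t * lam) - 1) * t ^ (-1 - s)) (Set.Ioi 0) ∧
      (1 / (-(Real.Gamma (1 - s)) / s)) *
          ∫ t in Set.Ioi (0 : ℝ), (Real.exp (-t * lam) - 1) * t ^ (-1 - s) = lam ^ s := by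
  obtain ⟨hs0, hs1⟩ := hs
  have b1 : ∀ t : ℝ, 0 < t → |Real.exp (-t * lam) - 1| ≤ 1 := by
    intro t ht
    have h1 : Real.exp (-t * lam) ≤ 1 := Real.exp_le_one_iff.2 (by nlinarith [mul_nonneg ht.le hlam])
    have h2 := Real.exp_pos (-t * lam)
    rw [abs_le]; constructor <;> linarith
  have b2 : ∀ t : ℝ, 0 < t → |Real.exp (-t * lam) - 1| ≤ lam * t := by
    intro t ht
    have h1 : Real.exp (-t * lam) ≤ 1 := Real.exp_le_one_iff.2 (by nlinarith [mul_nonneg ht.le hlam])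
    have h2 := Real.add_one_le_exp (-t * lam)
    have h3 := mul_nonneg ht.le hlam
    rw [abs_le]; constructor <;> nlinarith
  have hmeas : Measurable (fun t : ℝ => (Real.exp (-t * lam) - 1) * t ^ (-1 - s)) := by fun_prop
  have hint : IntegrableOn (fun t : ℝ => (Real.exp (-t * lam) - 1) * t ^ (-1 - s)) (Set.Ioi 0) := by
    rw [← Set.Ioc_union_Ioi_eq_Ioi (zero_le_one' ℝ)]
    apply IntegrableOn.union
    · have h : IntegrableOn (fun t : ℝ => lam * t ^ (-s)) (Set.Ioc 0 1) := by
        have := (intervalIntegral.intervalIntegrable_rpow' (a := 0) (b := 1)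
          (r := -s) (by linarith)).const_mul lam
        rwa [intervalIntegrable_iff_integrableOn_Ioc_of_le zero_le_one] at this
      refine Integrable.mono' h hmeas.aestronglyMeasurable ?_
      rw [ae_restrict_iff' measurableSet_Ioc]
      refine ae_of_all _ fun t ht => ?_
      have hp : 0 ≤ t ^ (-1 - s) := Real.rpow_nonneg ht.1.le _
      rw [Real.norm_eq_abs, abs_mul, abs_of_nonneg hp]
      calc _ ≤ lam * t * t ^ (-1 - s) := mul_le_mul_of_nonneg_right (b2 t ht.1) hp
        _ = lam * t ^ (-s) := by
          rw [show -s = 1 + (-1 - s) by ring, Real.rpow_add ht.1, Real.rpow_one]; ring_nf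
    · refine Integrable.mono' (integrableOn_Ioi_rpow_of_lt (a := -1 - s) (by linarith) zero_lt_one)
        hmeas.aestronglyMeasurable ?_
      rw [ae_restrict_iff' measurableSet_Ioi]
      refine ae_of_all _ fun t ht => ?_
      have ht0 : (0 : ℝ) < t := lt_trans zero_lt_one ht
      have hp : 0 ≤ t ^ (-1 - s) := Real.rpow_nonneg ht0.le _
      rw [Real.norm_eq_abs, abs_mul, abs_of_nonneg hp]
      simpa using mul_le_mul_of_nonneg_right (b1 t ht0) hp
  refine ⟨hint, ?_⟩
  rcases hlam.eq_or_lt with h0 | hpos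
  · subst h0
    simp [Real.zero_rpow hs0.ne']
  have hG : 0 < Real.Gamma (1 - s) := Real.Gamma_pos_of_pos (by linarith)
  have key := Real.integral_rpow_mul_exp_neg_mul_Ioi (a := 1 - s) (r := lam) (by linarith) hpos
  have hkint : IntegrableOn (fun t : ℝ => t ^ (1 - s - 1) * Real.exp (-(lam * t))) (Set.Ioi 0) :=
    .of_integral_ne_zero (by rw [key]; positivity)
  have heq : (fun t : ℝ => -lam * Real.exp (-t * lam) * (-(t ^ (-s)) / s)) =
      fun t => (lam / s) * (t ^ (1 - s - 1) * Real.exp (-(lam * t))) := by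
    funext t
    rw [show 1 - s - 1 = -s by ring, show -(lam * t) = -t * lam by ring]
    ring
  have habs : ∀ t : ℝ, 0 < t → |-(t ^ (-s)) / s| = t ^ (-s) / s := by
    intro t ht
    rw [abs_div, abs_neg, abs_of_pos hs0, abs_of_nonneg (Real.rpow_nonneg ht.le _)]
  have ibp := integral_Ioi_mul_deriv_eq_deriv_mul (a := (0 : ℝ)) (a' := (0 : ℝ)) (b' := (0 : ℝ))
    (u := fun t => Real.exp (-t * lam) - 1) (u' := fun t => -lam * Real.exp (-t * lam))
    (v := fun t => -(t ^ (-s)) / s) (v' := fun t => t ^ (-1 - s))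
    (by
      intro t _
      have := (((hasDerivAt_id t).neg.mul_const lam).exp).sub_const 1
      refine HasDerivAt.congr_deriv this ?_
      simp only [Pi.neg_apply, id_eq]; ring)
    (by
      intro t ht
      have := ((Real.hasDerivAt_rpow_const (p := -s) (Or.inl (ne_of_gt ht))).neg).div_const s
      refine HasDerivAt.congr_deriv this ?_
      rw [show -s - 1 = -1 - s by ring]
      field_simp)
    hint
    (by
      have : IntegrableOn (fun t : ℝ => -lam * Real.exp (-t * lam) * (-(t ^ (-s)) / s))
          (Set.Ioi 0) := by
        rw [heq]; exact hkint.const_mul _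
      exact this)
    (by
      have hl : Filter.Tendsto (fun t : ℝ => lam * t ^ (1 - s) / s)
          (nhdsWithin 0 (Set.Ioi 0)) (nhds 0) := by
        have h1 : ContinuousAt (fun t : ℝ => lam * t ^ (1 - s) / s) 0 :=
          ((Real.continuousAt_rpow_const 0 (1 - s) (Or.inr (by linarith))).const_mul lam).div_const s
        have h2 := h1.tendsto
        simp only [Real.zero_rpow (show 1 - s ≠ 0 by linarith), mul_zero, zero_div] at h2
        exact h2.mono_left nhdsWithin_le_nhds
      refine squeeze_zero_norm' ?_ hl
      filter_upwards [self_mem_nhdsWithin] with t ht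
      have ht : 0 < t := ht
      have hp : 0 ≤ t ^ (-s) / s := div_nonneg (Real.rpow_nonneg ht.le _) hs0.le
      rw [Pi.mul_apply, Real.norm_eq_abs, abs_mul, habs t ht]
      calc _ ≤ lam * t * (t ^ (-s) / s) := mul_le_mul_of_nonneg_right (b2 t ht) hp
        _ = lam * t ^ (1 - s) / s := by
          rw [show 1 - s = 1 + (-s) by ring, Real.rpow_add ht, Real.rpow_one]; ring)
    (by
      have hl : Filter.Tendsto (fun t : ℝ => t ^ (-s) / s) Filter.atTop (nhds 0) := by
        simpa using (tendsto_rpow_neg_atTop hs0).div_const s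
      refine squeeze_zero_norm' ?_ hl
      filter_upwards [Filter.eventually_gt_atTop 0] with t ht
      have hp : 0 ≤ t ^ (-s) / s := div_nonneg (Real.rpow_nonneg ht.le _) hs0.le
      rw [Pi.mul_apply, Real.norm_eq_abs, abs_mul, habs t ht]
      simpa using mul_le_mul_of_nonneg_right (b1 t ht) hp)
  rw [ibp, heq, integral_const_mul, key, one_div lam, Real.inv_rpow hlam,
    Real.rpow_sub hpos, Real.rpow_one]
  have := (Real.rpow_pos_of_pos hpos s).ne'
  field_simp
  try ring
end

section
/- Let n ≥ 1 be an integer, Ω ⊆ ℝⁿ an open set, σ : ℝⁿ → ℝ continuously differentiable, v : ℝⁿ → ℝ twice continuously differentiable, and F : ℝⁿ → ℝ such that −∇·(σ∇v)(x) = F(x) for all x ∈ Ω. Let φ : ℝⁿ → ℝ be twice continuously differentiable with compact support contained in Ω. Then the function ṽ := v + φ satisfies −∇·(σ∇ṽ)(x) = F(x) − ∇·(σ∇φ)(x) for all x ∈ Ω, and for every x ∉ Ω (in particular for every x ∈ ∂Ω) one has ṽ(x) = v(x) and the total derivative of ṽ at x equals the total derivative of v at x. -/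
open MeasureTheory Real Set

/-- The divergence-form operator `∇·(σ∇u)(x) = ∑ᵢ ∂ᵢ(σ ∂ᵢ u)(x)` on `ℝⁿ`. -/
noncomputable def divSigmaGrad (n : ℕ) (σ u : EuclideanSpace ℝ (Fin n) → ℝ)
    (x : EuclideanSpace ℝ (Fin n)) : ℝ :=
  ∑ i : Fin n,
    fderiv ℝ (fun y => σ y * fderiv ℝ u y (EuclideanSpace.single i 1)) x
      (EuclideanSpace.single i 1)

/-- **Gauge invariance for the local inverse source problem.**
If `−∇·(σ∇v) = F` in an open set `Ω`, and `φ` is `C²` with compact support in `Ω`,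
then `ṽ := v + φ` satisfies `−∇·(σ∇ṽ) = F − ∇·(σ∇φ)` in `Ω`, while outside `Ω`
(in particular on `∂Ω`) `ṽ` and its total derivative agree with those of `v`. -/
theorem gauge_invariance_local_source
    (n : ℕ) (hn : 1 ≤ n) (Ω : Set (EuclideanSpace ℝ (Fin n))) (hΩ : IsOpen Ω)
    (σ v F φ : EuclideanSpace ℝ (Fin n) → ℝ)
    (hσ : ContDiff ℝ 1 σ) (hv : ContDiff ℝ 2 v)
    (hF : ∀ x ∈ Ω, -divSigmaGrad n σ v x = F x)
    (hφ : ContDiff ℝ 2 φ) (hφc : HasCompactSupport φ) (hφΩ : tsupport φ ⊆ Ω) :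
    (∀ x ∈ Ω, -divSigmaGrad n σ (fun y => v y + φ y) x
        = F x - divSigmaGrad n σ φ x) ∧
    (∀ x ∉ Ω, (v x + φ x = v x) ∧
        fderiv ℝ (fun y => v y + φ y) x = fderiv ℝ v x) := by
  have hdv : Differentiable ℝ v := hv.differentiable (by norm_num)
  have hdφ : Differentiable ℝ φ := hφ.differentiable (by norm_num)
  have hdσ : Differentiable ℝ σ := hσ.differentiable (by norm_num)
  have key : ∀ u : EuclideanSpace ℝ (Fin n) → ℝ, ContDiff ℝ 2 u → ∀ e,
      Differentiable ℝ (fun y => σ y * fderiv ℝ u y e) := by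
    intro u hu e
    have h1 : Differentiable ℝ (fderiv ℝ u) :=
      (hu.fderiv_right (m := 1) (by norm_num)).differentiable (by norm_num)
    exact hdσ.mul (h1.clm_apply (differentiable_const e))
  refine ⟨fun x hx => ?_, fun x hx => ?_⟩
  · have hsum : divSigmaGrad n σ (fun y => v y + φ y) x
        = divSigmaGrad n σ v x + divSigmaGrad n σ φ x := by
      unfold divSigmaGrad
      rw [← Finset.sum_add_distrib]
      refine Finset.sum_congr rfl fun i _ => ?_
      have h2 : (fun y => σ y * fderiv ℝ (fun y => v y + φ y) y (EuclideanSpace.single i 1))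
          = fun y => σ y * fderiv ℝ v y (EuclideanSpace.single i 1)
            + σ y * fderiv ℝ φ y (EuclideanSpace.single i 1) := by
        funext y
        rw [fderiv_fun_add (hdv y) (hdφ y), add_apply, mul_add]
      rw [h2, fderiv_fun_add (key v hv _ x) (key φ hφ _ x), add_apply]
    rw [hsum, ← hF x hx]
    ring
  · have hx' : x ∉ tsupport φ := fun h => hx (hφΩ h)
    have h0 : φ x = 0 := image_eq_zero_of_notMem_tsupport hx'
    have h1 : fderiv ℝ φ x = 0 := by
      rw [(notMem_tsupport_iff_eventuallyEq.mp hx').fderiv_eq]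
      simp
    refine ⟨by rw [h0, add_zero], ?_⟩
    rw [fderiv_fun_add (hdv x) (hdφ x), h1, add_zero]
end

section
/- Let n ≥ 1 be an integer and s ∈ (0,1). For every y > 0, the function x ↦ P_{n,s}(x,y) is integrable on ℝⁿ and ∫_{ℝⁿ} P_{n,s}(x,y) dx = 1; equivalently, ∫_{ℝⁿ} (1 + |x|²)^{−(n+2s)/2} dx = π^{n/2} Γ(s) / Γ((n+2s)/2). -/
open MeasureTheory Real Set

/-- The Caffarelli–Silvestre normalizing constant `c_{n,s} = Γ((n+2s)/2)/(π^{n/2} Γ(s))`. -/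
noncomputable def csConst (n : ℕ) (s : ℝ) : ℝ :=
  Real.Gamma (((n : ℝ) + 2 * s) / 2) / (Real.pi ^ ((n : ℝ) / 2) * Real.Gamma s)

/-- The Caffarelli–Silvestre Poisson kernel
`P_{n,s}(x,y) = c_{n,s} y^{2s} (|x|² + y²)^{−(n+2s)/2}` for `x ∈ ℝⁿ`, `y > 0`. -/
noncomputable def csKernel (n : ℕ) (s : ℝ) (x : EuclideanSpace ℝ (Fin n)) (y : ℝ) : ℝ :=
  csConst n s * y ^ (2 * s) * (‖x‖ ^ 2 + y ^ 2) ^ (-(((n : ℝ) + 2 * s) / 2))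

theorem cs_aux (n : ℕ) (s c : ℝ) (hs : 0 < s) (hc : 0 < c) :
    Integrable (fun x : EuclideanSpace ℝ (Fin n) =>
      (‖x‖ ^ 2 + c) ^ (-(((n : ℝ) + 2 * s) / 2))) ∧
    ∫ x : EuclideanSpace ℝ (Fin n), (‖x‖ ^ 2 + c) ^ (-(((n : ℝ) + 2 * s) / 2))
      = Real.pi ^ ((n : ℝ) / 2) * Real.Gamma s / Real.Gamma (((n : ℝ) + 2 * s) / 2)
        * c ^ (-s) := by
  set a : ℝ := ((n : ℝ) + 2 * s) / 2 with ha_def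
  have ha : 0 < a := by positivity
  have hG : 0 < Real.Gamma a := Real.Gamma_pos_of_pos ha
  have hGs : 0 < Real.Gamma s := Real.Gamma_pos_of_pos hs
  let F : EuclideanSpace ℝ (Fin n) → ℝ → ℝ := fun x t =>
    t ^ (a - 1) * Real.exp (-((‖x‖ ^ 2 + c) * t))
  -- the inner integral in `t`
  have hT : ∀ x : EuclideanSpace ℝ (Fin n),
      ∫ t in Ioi (0 : ℝ), F x t = (‖x‖ ^ 2 + c) ^ (-a) * Real.Gamma a := by
    intro x
    have hr : 0 < ‖x‖ ^ 2 + c := by positivity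
    rw [Real.integral_rpow_mul_exp_neg_mul_Ioi ha hr, one_div, Real.inv_rpow hr.le,
      Real.rpow_neg hr.le]
  have hFe : ∀ t : ℝ, ∀ x : EuclideanSpace ℝ (Fin n),
      F x t = (t ^ (a - 1) * Real.exp (-(c * t))) * Real.exp (-t * ‖x‖ ^ 2) := by
    intro t x
    simp only [F]
    rw [mul_assoc, ← Real.exp_add]
    congr 2
    ring
  have hgauss : ∀ t : ℝ, 0 < t →
      ∫ x : EuclideanSpace ℝ (Fin n), Real.exp (-t * ‖x‖ ^ 2) = (π / t) ^ ((n : ℝ) / 2) := by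
    intro t ht
    simpa using GaussianFourier.integral_rexp_neg_mul_sq_norm
      (V := EuclideanSpace ℝ (Fin n)) ht
  have hgi : ∀ t : ℝ, 0 < t →
      Integrable (fun x : EuclideanSpace ℝ (Fin n) => Real.exp (-t * ‖x‖ ^ 2)) := by
    intro t ht
    apply Integrable.of_integral_ne_zero
    rw [hgauss t ht]
    positivity
  -- the inner integral in `x`
  have hX : ∀ t : ℝ, 0 < t → ∫ x : EuclideanSpace ℝ (Fin n), F x t
      = π ^ ((n : ℝ) / 2) * (t ^ (s - 1) * Real.exp (-(c * t))) := by
    intro t ht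
    simp_rw [hFe t]
    rw [integral_const_mul, hgauss t ht, Real.div_rpow Real.pi_pos.le ht.le]
    have h1 : t ^ (a - 1) = t ^ (s - 1) * t ^ ((n : ℝ) / 2) := by
      rw [← Real.rpow_add ht]
      congr 1
      rw [ha_def]
      ring
    have h2 : t ^ ((n : ℝ) / 2) ≠ 0 := (Real.rpow_pos_of_pos ht _).ne'
    rw [h1]
    field_simp
  have hgamma := Real.integral_rpow_mul_exp_neg_mul_Ioi hs hc
  have hgammai : Integrable (fun t : ℝ => t ^ (s - 1) * Real.exp (-(c * t)))
      (volume.restrict (Ioi 0)) := by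
    apply Integrable.of_integral_ne_zero
    rw [hgamma]
    positivity
  have hmeas : Measurable (Function.uncurry F) := by
    simp only [F, Function.uncurry_def]
    fun_prop
  have hint : Integrable (Function.uncurry F)
      ((volume : Measure (EuclideanSpace ℝ (Fin n))).prod (volume.restrict (Ioi (0 : ℝ)))) := by
    rw [integrable_prod_iff' hmeas.aestronglyMeasurable]
    constructor
    · filter_upwards [ae_restrict_mem measurableSet_Ioi] with t ht
      simp only [Function.uncurry_apply_pair, hFe t]
      exact (hgi t ht).const_mul _
    · refine (hgammai.const_mul (π ^ ((n : ℝ) / 2))).congr ?_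
      filter_upwards [ae_restrict_mem measurableSet_Ioi] with t ht
      rw [← hX t ht]
      refine integral_congr_ae (Filter.Eventually.of_forall fun x => ?_)
      have ht' : (0 : ℝ) < t := ht
      have : 0 ≤ F x t := by simp only [F]; positivity
      simp only [Function.uncurry_apply_pair]
      rw [Real.norm_of_nonneg this]
  have hleft := hint.integral_prod_left
  simp only [Function.uncurry_apply_pair, hT] at hleft
  have hswap := integral_integral_swap hint
  simp_rw [hT] at hswap
  rw [setIntegral_congr_fun measurableSet_Ioi (fun t ht => hX t ht), integral_mul_const,
    integral_const_mul, hgamma, one_div, Real.inv_rpow hc.le, ← Real.rpow_neg hc.le] at hswap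
  constructor
  · refine (hleft.mul_const (Real.Gamma a)⁻¹).congr (Filter.Eventually.of_forall fun x => ?_)
    simp only
    field_simp
  · rw [← mul_left_inj' hG.ne', hswap]
    field_simp

/-- **Normalization of the Caffarelli–Silvestre Poisson kernel.**
For every `y > 0`, `x ↦ P_{n,s}(x,y)` is integrable on `ℝⁿ` with
`∫ P_{n,s}(x,y) dx = 1`; equivalently
`∫ (1+|x|²)^{−(n+2s)/2} dx = π^{n/2} Γ(s)/Γ((n+2s)/2)`. -/
theorem csKernel_integral_one
    (n : ℕ) (hn : 1 ≤ n) (s : ℝ) (hs : s ∈ Set.Ioo (0 : ℝ) 1) :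
    (∀ y : ℝ, 0 < y →
      Integrable (fun x : EuclideanSpace ℝ (Fin n) => csKernel n s x y) ∧
      ∫ x : EuclideanSpace ℝ (Fin n), csKernel n s x y = 1) ∧
    ∫ x : EuclideanSpace ℝ (Fin n), (1 + ‖x‖ ^ 2) ^ (-(((n : ℝ) + 2 * s) / 2))
      = Real.pi ^ ((n : ℝ) / 2) * Real.Gamma s / Real.Gamma (((n : ℝ) + 2 * s) / 2) := by
  have hs0 : 0 < s := hs.1
  have hG : 0 < Real.Gamma (((n : ℝ) + 2 * s) / 2) := Real.Gamma_pos_of_pos (by positivity)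
  have hGs : 0 < Real.Gamma s := Real.Gamma_pos_of_pos hs0
  refine ⟨fun y hy => ?_, ?_⟩
  · obtain ⟨h1, h2⟩ := cs_aux n s (y ^ 2) hs0 (by positivity)
    simp only [csKernel]
    refine ⟨h1.const_mul _, ?_⟩
    rw [integral_const_mul, h2, csConst]
    have h3 : (y ^ 2) ^ (-s) = (y ^ (2 * s))⁻¹ := by
      rw [← Real.rpow_natCast, ← Real.rpow_mul hy.le, ← Real.rpow_neg hy.le]
      congr 1
      push_cast
      ring
    rw [h3]
    have h4 : y ^ (2 * s) ≠ 0 := (Real.rpow_pos_of_pos hy _).ne'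
    have h5 : Real.pi ^ ((n : ℝ) / 2) ≠ 0 := (Real.rpow_pos_of_pos Real.pi_pos _).ne'
    field_simp
  · have h := (cs_aux n s 1 hs0 one_pos).2
    simp only [Real.one_rpow, mul_one] at h
    simp_rw [add_comm (1 : ℝ)]
    exact h
end

section
/- Let n ≥ 1 be an integer and s ∈ (0,1). The Caffarelli–Silvestre Poisson kernel P_{n,s} satisfies the degenerate elliptic equation ∇_{x,y}·(y^{1−2s} ∇_{x,y} P_{n,s}) = 0 on ℝⁿ × (0,∞); explicitly, for every x ∈ ℝⁿ and y > 0: y · Δ_x P_{n,s}(x,y) + y · ∂²_y P_{n,s}(x,y) + (1−2s) · ∂_y P_{n,s}(x,y) = 0, where Δ_x denotes the Laplacian in the x-variables. -/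
open MeasureTheory Real Set

theorem hasDerivAt_aux (p q r t : ℝ) (ht : 0 < t) (hr : 0 ≤ r) :
    HasDerivAt (fun t : ℝ => t ^ p * (r + t ^ 2) ^ q)
      (p * (t ^ (p - 1) * (r + t ^ 2) ^ q)
        + 2 * q * (t ^ (p + 1) * (r + t ^ 2) ^ (q - 1))) t := by
  have hR : 0 < r + t ^ 2 := by positivity
  have h1 : HasDerivAt (fun t : ℝ => t ^ p) (p * t ^ (p - 1)) t :=
    Real.hasDerivAt_rpow_const (Or.inl ht.ne')
  have h2 : HasDerivAt (fun t : ℝ => r + t ^ 2) (2 * t) t := by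
    simpa using (hasDerivAt_pow 2 t).const_add r
  have h3 := h1.mul (h2.rpow_const (p := q) (Or.inl hR.ne'))
  refine h3.congr_deriv ?_
  rw [Real.rpow_add_one ht.ne']
  ring

theorem hasFDerivAt_aux {n : ℕ} (b c : ℝ) (hc : 0 < c) (x : EuclideanSpace ℝ (Fin n)) :
    HasFDerivAt (fun x : EuclideanSpace ℝ (Fin n) => (‖x‖ ^ 2 + c) ^ b)
      ((b * (‖x‖ ^ 2 + c) ^ (b - 1)) • ((2 : ℝ) • innerSL ℝ x)) x := by
  have hR : 0 < ‖x‖ ^ 2 + c := by positivity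
  have h := ((hasStrictFDerivAt_norm_sq x).hasFDerivAt.add_const c).rpow_const
    (p := b) (Or.inl hR.ne')
  refine h.congr_fderiv ?_
  ext v
  simp

theorem fderiv_aux {n : ℕ} (K b c : ℝ) (hc : 0 < c) (x : EuclideanSpace ℝ (Fin n)) (i : Fin n) :
    fderiv ℝ (fun x' : EuclideanSpace ℝ (Fin n) =>
      fderiv ℝ (fun x'' : EuclideanSpace ℝ (Fin n) => K * (‖x''‖ ^ 2 + c) ^ b) x'
        (EuclideanSpace.single i 1)) x (EuclideanSpace.single i 1)
      = K * (4 * b * (b - 1) * (‖x‖ ^ 2 + c) ^ (b - 2) * x i ^ 2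
        + 2 * b * (‖x‖ ^ 2 + c) ^ (b - 1)) := by
  have h1 : (fun x' : EuclideanSpace ℝ (Fin n) =>
      fderiv ℝ (fun x'' : EuclideanSpace ℝ (Fin n) => K * (‖x''‖ ^ 2 + c) ^ b) x'
        (EuclideanSpace.single i 1))
      = fun x' => (2 * K * b) * ((‖x'‖ ^ 2 + c) ^ (b - 1) * EuclideanSpace.proj (𝕜 := ℝ) i x') := by
    funext x'
    rw [((hasFDerivAt_aux b c hc x').const_mul K).fderiv]
    simp [EuclideanSpace.inner_single_right]
    ring
  rw [h1]
  have h2 := ((hasFDerivAt_aux (b - 1) c hc x).fun_mul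
    (EuclideanSpace.proj i : EuclideanSpace ℝ (Fin n) →L[ℝ] ℝ).hasFDerivAt).const_mul (2 * K * b)
  rw [HasFDerivAt.fderiv h2]
  simp [EuclideanSpace.inner_single_right]
  rw [show b - 1 - 1 = b - 2 by ring]
  ring

/-- **The Poisson kernel solves the degenerate extension equation.**
For every `x ∈ ℝⁿ` and `y > 0`,
`y·Δ_x P_{n,s}(x,y) + y·∂²_y P_{n,s}(x,y) + (1−2s)·∂_y P_{n,s}(x,y) = 0`,
i.e. `∇_{x,y}·(y^{1−2s} ∇_{x,y} P_{n,s}) = 0` on `ℝⁿ × (0,∞)`. -/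
theorem csKernel_extension_equation
    (n : ℕ) (hn : 1 ≤ n) (s : ℝ) (hs : s ∈ Set.Ioo (0 : ℝ) 1)
    (x : EuclideanSpace ℝ (Fin n)) (y : ℝ) (hy : 0 < y) :
    y * (∑ i : Fin n,
        fderiv ℝ (fun x' => fderiv ℝ (fun x'' => csKernel n s x'' y) x'
            (EuclideanSpace.single i 1)) x (EuclideanSpace.single i 1)) +
      y * deriv (deriv (fun t : ℝ => csKernel n s x t)) y +
      (1 - 2 * s) * deriv (fun t : ℝ => csKernel n s x t) y = 0 := by
  have hR : 0 < ‖x‖ ^ 2 + y ^ 2 := by positivity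
  have hr : 0 ≤ ‖x‖ ^ 2 := by positivity
  have hx : ∑ i : Fin n, x i ^ 2 = ‖x‖ ^ 2 := by
    rw [EuclideanSpace.norm_sq_eq]
    simp
  unfold csKernel
  simp only [fderiv_aux _ _ _ (pow_pos hy 2) x]
  rw [← Finset.mul_sum, Finset.sum_add_distrib, ← Finset.mul_sum, hx]
  simp only [Finset.sum_const, Finset.card_univ, Fintype.card_fin, nsmul_eq_mul]
  obtain ⟨a, ha⟩ : ∃ a : ℝ, a = -(((n : ℝ) + 2 * s) / 2) := ⟨_, rfl⟩
  rw [← ha]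
  have hn' : (n : ℝ) = -2 * a - 2 * s := by rw [ha]; ring
  rw [hn']
  generalize csConst n s = C
  generalize ‖x‖ ^ 2 = r at *
  have hd : ∀ t : ℝ, 0 < t → HasDerivAt (fun t : ℝ => C * t ^ (2 * s) * (r + t ^ 2) ^ a)
      (C * (2 * s * (t ^ (2 * s - 1) * (r + t ^ 2) ^ a)
        + 2 * a * (t ^ (2 * s + 1) * (r + t ^ 2) ^ (a - 1)))) t := by
    intro t ht
    have := (hasDerivAt_aux (2 * s) a r t ht hr).const_mul C
    simpa only [mul_assoc] using this
  have hev : deriv (fun t : ℝ => C * t ^ (2 * s) * (r + t ^ 2) ^ a) =ᶠ[nhds y]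
      fun t => C * (2 * s * (t ^ (2 * s - 1) * (r + t ^ 2) ^ a)
        + 2 * a * (t ^ (2 * s + 1) * (r + t ^ 2) ^ (a - 1))) := by
    filter_upwards [lt_mem_nhds hy] with t ht using (hd t ht).deriv
  have hd2 := (((hasDerivAt_aux (2 * s - 1) a r y hy hr).const_mul (2 * s)).fun_add
    ((hasDerivAt_aux (2 * s + 1) (a - 1) r y hy hr).const_mul (2 * a))).const_mul C
  rw [hev.deriv_eq, HasDerivAt.deriv hd2, (hd y hy).deriv]
  have e1 : (r + y ^ 2) ^ (a - 1) = (r + y ^ 2) ^ (a - 2) * (r + y ^ 2) := by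
    rw [← Real.rpow_add_one hR.ne']; congr 1; ring
  have e0 : (r + y ^ 2) ^ a = (r + y ^ 2) ^ (a - 2) * (r + y ^ 2) * (r + y ^ 2) := by
    rw [← e1, ← Real.rpow_add_one hR.ne']; congr 1; ring
  have f1 : y ^ (2 * s - 1) = y ^ (2 * s - 2) * y := by
    rw [← Real.rpow_add_one hy.ne']; congr 1; ring
  have f2 : y ^ (2 * s) = y ^ (2 * s - 2) * y * y := by
    rw [← f1, ← Real.rpow_add_one hy.ne']; congr 1; ring
  have f3 : y ^ (2 * s + 1) = y ^ (2 * s - 2) * y * y * y := by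
    rw [← f2, ← Real.rpow_add_one hy.ne']
  have f4 : y ^ (2 * s + 1 + 1) = y ^ (2 * s - 2) * y * y * y * y := by
    rw [← f3, ← Real.rpow_add_one hy.ne']
  rw [show 2 * s - 1 - 1 = 2 * s - 2 by ring, show 2 * s - 1 + 1 = 2 * s by ring,
    show 2 * s + 1 - 1 = 2 * s by ring, show a - 1 - 1 = a - 2 by ring, e1, e0, f4, f3, f2, f1]
  ring
end

section
/- Let n ≥ 1 be an integer and s ∈ (0,1). For every x ∈ ℝⁿ and y > 0, the function t ↦ e^{−y²/(4t)} (4πt)^{−n/2} e^{−|x|²/(4t)} t^{−1−s} is integrable on (0,∞) and P_{n,s}(x,y) = (y^{2s}/(4^s Γ(s))) ∫₀^∞ e^{−y²/(4t)} (4πt)^{−n/2} e^{−|x|²/(4t)} t^{−1−s} dt. -/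
open MeasureTheory Real Set

/-- **Stinga–Torrea subordination formula for the extension kernel.**
For every `x ∈ ℝⁿ` and `y > 0`, the function
`t ↦ e^{−y²/(4t)} (4πt)^{−n/2} e^{−|x|²/(4t)} t^{−1−s}` is integrable on `(0,∞)` and
`P_{n,s}(x,y) = (y^{2s}/(4^s Γ(s))) ∫₀^∞ e^{−y²/(4t)} (4πt)^{−n/2} e^{−|x|²/(4t)} t^{−1−s} dt`. -/
theorem csKernel_subordination
    (n : ℕ) (hn : 1 ≤ n) (s : ℝ) (hs : s ∈ Set.Ioo (0 : ℝ) 1)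
    (x : EuclideanSpace ℝ (Fin n)) (y : ℝ) (hy : 0 < y) :
    IntegrableOn (fun t : ℝ => Real.exp (-y ^ 2 / (4 * t)) *
        ((4 * Real.pi * t) ^ (-(n : ℝ) / 2) * Real.exp (-‖x‖ ^ 2 / (4 * t))) *
        t ^ (-1 - s)) (Set.Ioi 0) ∧
    csKernel n s x y
      = (y ^ (2 * s) / ((4 : ℝ) ^ s * Real.Gamma s)) *
        ∫ t in Set.Ioi (0 : ℝ), Real.exp (-y ^ 2 / (4 * t)) *
          ((4 * Real.pi * t) ^ (-(n : ℝ) / 2) * Real.exp (-‖x‖ ^ 2 / (4 * t))) *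
          t ^ (-1 - s) := by
  obtain ⟨hs0, hs1⟩ := hs
  have hR : 0 < ‖x‖ ^ 2 + y ^ 2 := by positivity
  set R := ‖x‖ ^ 2 + y ^ 2 with hRdef
  set f : ℝ → ℝ := fun t : ℝ => Real.exp (-y ^ 2 / (4 * t)) *
        ((4 * Real.pi * t) ^ (-(n : ℝ) / 2) * Real.exp (-‖x‖ ^ 2 / (4 * t))) *
        t ^ (-1 - s) with hf
  have hn0 : (0 : ℝ) ≤ (n : ℝ) := Nat.cast_nonneg n
  have hq : -1 < (n : ℝ) / 2 + s - 1 := by linarith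
  have hb : 0 < R / 4 := by positivity
  have key : ∀ u ∈ Set.Ioi (0 : ℝ),
      (4 * Real.pi) ^ (-(n : ℝ) / 2) *
        (u ^ ((n : ℝ) / 2 + s - 1) * Real.exp (-(R / 4) * u ^ (1 : ℝ)))
      = (|(-1 : ℝ)| * u ^ ((-1 : ℝ) - 1)) • f (u ^ (-1 : ℝ)) := by
    intro u hu
    have hu : 0 < u := hu
    have h4 : (0 : ℝ) ≤ 4 * Real.pi := by positivity
    simp only [hf, smul_eq_mul, abs_neg, abs_one, one_mul]
    rw [mul_rpow h4 (by positivity), ← rpow_mul hu.le, ← rpow_mul hu.le, rpow_neg_one, rpow_one]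
    have e1 : Real.exp (-(R / 4) * u)
        = Real.exp (-y ^ 2 / (4 * u⁻¹)) * Real.exp (-‖x‖ ^ 2 / (4 * u⁻¹)) := by
      rw [← Real.exp_add, hRdef]
      congr 1
      field_simp
      ring
    have e2 : u ^ ((n : ℝ) / 2 + s - 1)
        = u ^ ((-1 : ℝ) - 1) * u ^ (-1 * (-(n : ℝ) / 2)) * u ^ (-1 * (-1 - s)) := by
      rw [← rpow_add hu, ← rpow_add hu]
      congr 1
      ring
    rw [e1, e2]
    ring
  constructor
  · rw [← integrableOn_Ioi_comp_rpow_iff f (p := -1) (by norm_num)]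
    exact IntegrableOn.congr_fun ((integrableOn_rpow_mul_exp_neg_mul_rpow hq one_pos hb).const_mul
      ((4 * Real.pi) ^ (-(n : ℝ) / 2))) key measurableSet_Ioi
  · rw [← integral_comp_rpow_Ioi f (p := -1) (by norm_num),
      ← setIntegral_congr_fun measurableSet_Ioi key, integral_const_mul,
      integral_rpow_mul_exp_neg_mul_rpow one_pos hq hb, csKernel, csConst, ← hRdef]
    have hG : 0 < Real.Gamma s := Real.Gamma_pos_of_pos hs0
    have a1 : ((n : ℝ) / 2 + s - 1 + 1) / 1 = ((n : ℝ) + 2 * s) / 2 := by ring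
    have a2 : -((n : ℝ) / 2 + s - 1 + 1) / 1 = -(((n : ℝ) + 2 * s) / 2) := by ring
    have a3 : (4 : ℝ) ^ (-(((n : ℝ) + 2 * s) / 2)) = ((4 : ℝ) ^ ((n : ℝ) / 2))⁻¹ * ((4 : ℝ) ^ s)⁻¹ := by
      rw [← rpow_neg (by norm_num), ← rpow_neg (by norm_num), ← rpow_add (by norm_num)]
      congr 1
      ring
    rw [a1, a2, div_rpow hR.le (by norm_num), a3, neg_div,
      rpow_neg (x := 4 * Real.pi) (by positivity), mul_rpow (by norm_num) Real.pi_pos.le]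
    have p1 : (0 : ℝ) < (4 : ℝ) ^ ((n : ℝ) / 2) := by positivity
    have p2 : (0 : ℝ) < (4 : ℝ) ^ s := by positivity
    have p3 : (0 : ℝ) < Real.pi ^ ((n : ℝ) / 2) := by positivity
    generalize (4 : ℝ) ^ ((n : ℝ) / 2) = A at *
    generalize (4 : ℝ) ^ s = B at *
    generalize Real.pi ^ ((n : ℝ) / 2) = C at *
    generalize R ^ (-(((n : ℝ) + 2 * s) / 2)) = D at *
    generalize y ^ (2 * s) = E at *
    field_simp
end

section
/- Let n ≥ 1 be an integer, s ∈ (0,1), and let u : ℝⁿ → ℝ be bounded and continuous. Then for every x ∈ ℝⁿ, the extension ũ(x,y) := ∫_{ℝⁿ} P_{n,s}(x−z, y) u(z) dz converges to u(x) as y → 0⁺. -/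
open MeasureTheory Real Set Filter

lemma cs_integrable (n : ℕ) (s : ℝ) (hs : 0 < s) :
    Integrable (fun x : EuclideanSpace ℝ (Fin n) =>
      (1 + ‖x‖ ^ 2) ^ (-(((n : ℝ) + 2 * s) / 2))) := by
  have h := integrable_rpow_neg_one_add_norm_sq (E := EuclideanSpace ℝ (Fin n))
    (μ := volume) (r := (n : ℝ) + 2 * s) (by simp [hs])
  simpa only [neg_div] using h

lemma cs_integral (n : ℕ) (s : ℝ) (hs : 0 < s) :
    Real.Gamma (((n : ℝ) + 2 * s) / 2) * ∫ x : EuclideanSpace ℝ (Fin n),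
      (1 + ‖x‖ ^ 2) ^ (-(((n : ℝ) + 2 * s) / 2))
      = Real.pi ^ ((n : ℝ) / 2) * Real.Gamma s := by
  set a : ℝ := ((n : ℝ) + 2 * s) / 2 with ha
  have hn0 : (0 : ℝ) ≤ n := Nat.cast_nonneg n
  have ha0 : 0 < a := by rw [ha]; linarith
  have hinner : ∀ t : ℝ, 0 < t → ∫ x : EuclideanSpace ℝ (Fin n),
      t ^ (a - 1) * Real.exp (-((1 + ‖x‖ ^ 2) * t))
      = Real.pi ^ ((n : ℝ) / 2) * (Real.exp (-t) * t ^ (s - 1)) := by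
    intro t ht
    have h1 := GaussianFourier.integral_rexp_neg_mul_sq_norm
      (V := EuclideanSpace ℝ (Fin n)) ht
    have h2 : ∀ x : EuclideanSpace ℝ (Fin n), t ^ (a - 1) * Real.exp (-((1 + ‖x‖ ^ 2) * t))
        = (t ^ (a - 1) * Real.exp (-t)) * Real.exp (-t * ‖x‖ ^ 2) := by
      intro x
      rw [mul_assoc, ← Real.exp_add]
      congr 2
      ring
    simp_rw [h2]
    rw [integral_const_mul, h1, finrank_euclideanSpace_fin, Real.div_rpow Real.pi_pos.le ht.le]
    have h3 : t ^ (a - 1) = t ^ (s - 1) * t ^ ((n : ℝ) / 2) := by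
      rw [← Real.rpow_add ht]; congr 1; rw [ha]; ring
    rw [h3]
    have := (Real.rpow_pos_of_pos ht ((n : ℝ) / 2)).ne'
    field_simp
  have hint : Integrable (Function.uncurry fun (x : EuclideanSpace ℝ (Fin n)) (t : ℝ) =>
      t ^ (a - 1) * Real.exp (-((1 + ‖x‖ ^ 2) * t)))
      ((volume : Measure (EuclideanSpace ℝ (Fin n))).prod (volume.restrict (Ioi (0 : ℝ)))) := by
    have hm : Measurable (Function.uncurry fun (x : EuclideanSpace ℝ (Fin n)) (t : ℝ) =>
      t ^ (a - 1) * Real.exp (-((1 + ‖x‖ ^ 2) * t))) := by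
      unfold Function.uncurry
      fun_prop
    rw [integrable_prod_iff' hm.aestronglyMeasurable]
    constructor
    · filter_upwards [ae_restrict_mem measurableSet_Ioi] with t ht
      have ht' : 0 < t := ht
      by_contra hcon
      have h0 := hinner t ht'
      simp only [Function.uncurry] at hcon
      rw [integral_undef hcon] at h0
      have : 0 < Real.pi ^ ((n : ℝ) / 2) * (Real.exp (-t) * t ^ (s - 1)) := by positivity
      linarith
    · have hG := (Real.GammaIntegral_convergent hs).const_mul (Real.pi ^ ((n : ℝ) / 2))
      refine hG.congr ?_
      filter_upwards [ae_restrict_mem measurableSet_Ioi] with t ht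
      have ht' : 0 < t := ht
      rw [← hinner t ht']
      refine integral_congr_ae (Eventually.of_forall fun x => ?_)
      simp only [Function.uncurry]
      rw [Real.norm_of_nonneg (by positivity)]
  have hswap := integral_integral_swap hint
  have hL : ∀ x : EuclideanSpace ℝ (Fin n),
      ∫ t in Ioi (0 : ℝ), t ^ (a - 1) * Real.exp (-((1 + ‖x‖ ^ 2) * t))
      = Real.Gamma a * (1 + ‖x‖ ^ 2) ^ (-a) := by
    intro x
    have hp : 0 < 1 + ‖x‖ ^ 2 := by positivity
    rw [Real.integral_rpow_mul_exp_neg_mul_Ioi ha0 hp, one_div, Real.inv_rpow hp.le,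
      Real.rpow_neg hp.le, mul_comm]
  simp_rw [hL] at hswap
  rw [integral_const_mul] at hswap
  rw [hswap, setIntegral_congr_fun measurableSet_Ioi (fun t ht => hinner t ht),
    integral_const_mul, Real.Gamma_eq_integral hs]

/-- **Attainment of the boundary value in the Caffarelli–Silvestre extension.**
If `u : ℝⁿ → ℝ` is bounded and continuous, then for every `x ∈ ℝⁿ` the extension
`ũ(x,y) = ∫ P_{n,s}(x−z,y) u(z) dz` converges to `u(x)` as `y → 0⁺`. -/
theorem cs_extension_boundary_value
    (n : ℕ) (hn : 1 ≤ n) (s : ℝ) (hs : s ∈ Set.Ioo (0 : ℝ) 1)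
    (u : EuclideanSpace ℝ (Fin n) → ℝ) (hu : Continuous u)
    (hub : ∃ M : ℝ, ∀ x : EuclideanSpace ℝ (Fin n), |u x| ≤ M) :
    ∀ x : EuclideanSpace ℝ (Fin n),
      Tendsto (fun y : ℝ => ∫ z : EuclideanSpace ℝ (Fin n), csKernel n s (x - z) y * u z)
        (nhdsWithin 0 (Set.Ioi 0)) (nhds (u x)) := by
  intro x
  obtain ⟨M, hM⟩ := hub
  have hs0 : 0 < s := hs.1
  set k : EuclideanSpace ℝ (Fin n) → ℝ := fun w =>
    csConst n s * (1 + ‖w‖ ^ 2) ^ (-(((n : ℝ) + 2 * s) / 2)) with hk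
  have hkint : Integrable k := (cs_integrable n s hs0).const_mul _
  have hk1 : ∫ w, k w = 1 := by
    have hG : 0 < Real.pi ^ ((n : ℝ) / 2) * Real.Gamma s :=
      mul_pos (Real.rpow_pos_of_pos Real.pi_pos _) (Real.Gamma_pos_of_pos hs0)
    rw [hk, integral_const_mul, csConst, div_mul_eq_mul_div, cs_integral n s hs0,
      div_self hG.ne']
  have hlim : Tendsto (fun y : ℝ => ∫ w, k w * u (x - y • w))
      (nhdsWithin 0 (Set.Ioi 0)) (nhds (∫ w, k w * u x)) := by
    refine tendsto_integral_filter_of_dominated_convergence (fun w => ‖k w‖ * M) ?_ ?_ ?_ ?_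
    · refine Eventually.of_forall fun y => hkint.aestronglyMeasurable.mul ?_
      exact (hu.comp (by fun_prop)).aestronglyMeasurable
    · refine Eventually.of_forall fun y => Eventually.of_forall fun w => ?_
      rw [norm_mul]
      exact mul_le_mul_of_nonneg_left (hM _) (norm_nonneg _)
    · exact hkint.norm.mul_const M
    · refine Eventually.of_forall fun w => ?_
      have hc : Continuous (fun y : ℝ => k w * u (x - y • w)) :=
        continuous_const.mul (hu.comp (by fun_prop))
      have := hc.tendsto 0
      simp only [zero_smul, sub_zero] at this
      exact this.mono_left nhdsWithin_le_nhds
  rw [integral_mul_const, hk1, one_mul] at hlim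
  refine hlim.congr' ?_
  filter_upwards [self_mem_nhdsWithin] with y hy
  have hy0 : 0 < y := hy
  have e1 := integral_sub_left_eq_self
    (fun w : EuclideanSpace ℝ (Fin n) => csKernel n s w y * u (x - w)) volume x
  simp only [sub_sub_cancel] at e1
  have e2 := Measure.integral_comp_smul (volume : Measure (EuclideanSpace ℝ (Fin n)))
    (fun w : EuclideanSpace ℝ (Fin n) => csKernel n s w y * u (x - w)) y
  rw [finrank_euclideanSpace_fin, abs_of_pos (by positivity), smul_eq_mul] at e2
  have e3 : ∀ w : EuclideanSpace ℝ (Fin n), csKernel n s (y • w) y = (y ^ n)⁻¹ * k w := by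
    intro w
    have hp : 0 < 1 + ‖w‖ ^ 2 := by positivity
    have h1 : ‖y • w‖ ^ 2 + y ^ 2 = y ^ 2 * (1 + ‖w‖ ^ 2) := by
      rw [norm_smul, Real.norm_of_nonneg hy0.le]; ring
    have h2 : y ^ (2 * s) * (y ^ 2) ^ (-(((n : ℝ) + 2 * s) / 2)) = (y ^ n)⁻¹ := by
      rw [← Real.rpow_natCast y 2, ← Real.rpow_mul hy0.le, ← Real.rpow_add hy0,
        ← Real.rpow_natCast y n, ← Real.rpow_neg hy0.le]
      congr 1
      push_cast
      ring
    rw [csKernel, h1, Real.mul_rpow (by positivity) hp.le, ← h2, hk]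
    ring
  simp_rw [e3, mul_assoc] at e2
  rw [integral_const_mul] at e2
  rw [e1]
  exact mul_left_cancel₀ (inv_ne_zero (pow_pos hy0 n).ne') e2
end
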